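/- arXiv:2211.09629 — 2 statements merged into one kernel-verified Lean document; each statement's English description precedes it below -/
import Mathlib

section
/- Fix reals $a>0$, $\tilde h>0$, $M>0$, $N>0$ and $\bar K\ge 0$. For $\varepsilon>0$ and $t\ge 0$, define $\bar a_1 := 1+N\tilde h$, $\bar b_1 := a+\varepsilon(1+\bar K)$, $\bar a_2 := a(1+\bar K)-\tilde h M+\varepsilon\bar K$, $\bar b_2 := a+\varepsilon$. Consider the condition (i) for all $\varepsilon>0$ and all $t\ge 0$, $\; t\,\bar b_2(\bar a_1\bar b_1-\bar b_2)+\bar b_1(\bar a_2\bar b_1-\varepsilon a\bar K)>0$. If $\bar K>0$, then (i) is equivalent to (ii) $a(1+\bar K)\ge\tilde h M$. If $\bar K=0$, then (i) is equivalent to the strict inequality $a(1+\bar K)>\tilde h M$, that is, $a>\tilde h M$. -/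
namespace LandscapeHurwitz

/-- `ā₁ = 1 + N h̃`. -/
def a₁ (h N : ℝ) : ℝ := 1 + N * h

/-- `b̄₁ = a + ε (1 + K̄)`. -/
def b₁ (a K ε : ℝ) : ℝ := a + ε * (1 + K)

/-- `ā₂ = a (1 + K̄) − h̃ M + ε K̄`. -/
def a₂ (a h M K ε : ℝ) : ℝ := a * (1 + K) - h * M + ε * K

/-- `b̄₂ = a + ε`. -/
def b₂ (a ε : ℝ) : ℝ := a + ε

/-- The quantity `Δ₄ / ε = t b̄₂ (ā₁ b̄₁ − b̄₂) + b̄₁ (ā₂ b̄₁ − ε a K̄)`. -/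
def reducedDelta4 (a h M N K ε t : ℝ) : ℝ :=
  t * b₂ a ε * (a₁ h N * b₁ a K ε - b₂ a ε) +
    b₁ a K ε * (a₂ a h M K ε * b₁ a K ε - ε * a * K)

end LandscapeHurwitz

/-!
Put `d = a (1 + K) - h M`. After the terms linear in `ε a K` cancel, the reduced determinant is
`t b₂ (ε K + N h b₁) + (d b₁² + ε² K (1 + K) b₁)`. It is monotone in `t`, so only `t = 0` matters.
There it tends to `d a²` as `ε → 0⁺`, which forces `0 ≤ d`. If `K > 0`, the term of order `ε²` keeps
the determinant positive even when `d = 0`; if `K = 0`, that term vanishes and `d b₁²` decides.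
-/

open Filter Topology

namespace LandscapeHurwitz

variable {a h M N K ε t : ℝ}

theorem b₁_pos (ha : 0 < a) (hK : 0 ≤ K) (hε : 0 ≤ ε) : 0 < b₁ a K ε := by
  unfold b₁
  positivity

theorem reducedDelta4_at_zero (a h M N K ε : ℝ) :
    reducedDelta4 a h M N K ε 0 =
      (a * (1 + K) - h * M) * b₁ a K ε ^ 2 + ε ^ 2 * (K * (1 + K)) * b₁ a K ε := by
  simp only [reducedDelta4, b₁, a₂]
  ring

theorem reducedDelta4_eq_add_at_zero (a h M N K ε t : ℝ) :
    reducedDelta4 a h M N K ε t =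
      t * b₂ a ε * (ε * K + N * h * b₁ a K ε) + reducedDelta4 a h M N K ε 0 := by
  simp only [reducedDelta4, a₁, b₁, b₂]
  ring

theorem reducedDelta4_at_zero_le (ha : 0 < a) (hNh : 0 ≤ N * h) (hK : 0 ≤ K) (hε : 0 ≤ ε)
    (ht : 0 ≤ t) : reducedDelta4 a h M N K ε 0 ≤ reducedDelta4 a h M N K ε t := by
  have hb₁ : 0 < b₁ a K ε := b₁_pos ha hK hε
  have hb₂ : 0 ≤ b₂ a ε := add_nonneg ha.le hε
  rw [reducedDelta4_eq_add_at_zero a h M N K ε t]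
  exact le_add_of_nonneg_left (by positivity)

theorem forall_reducedDelta4_pos_iff_at_zero (ha : 0 < a) (hNh : 0 ≤ N * h) (hK : 0 ≤ K)
    (hε : 0 ≤ ε) :
    (∀ t, 0 ≤ t → 0 < reducedDelta4 a h M N K ε t) ↔ 0 < reducedDelta4 a h M N K ε 0 :=
  ⟨fun hpos => hpos 0 le_rfl,
    fun hpos _ ht => hpos.trans_le (reducedDelta4_at_zero_le ha hNh hK hε ht)⟩

theorem tendsto_reducedDelta4_at_zero (a h M N K : ℝ) :
    Tendsto (fun ε => reducedDelta4 a h M N K ε 0) (𝓝[>] 0)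
      (𝓝 ((a * (1 + K) - h * M) * a ^ 2)) := by
  have hcont : Continuous fun ε => reducedDelta4 a h M N K ε 0 := by
    unfold reducedDelta4 a₂ b₁ b₂
    fun_prop
  have hlim := (hcont.tendsto 0).mono_left (nhdsWithin_le_nhds (s := Set.Ioi 0))
  simpa [reducedDelta4_at_zero, b₁] using hlim

theorem le_of_forall_reducedDelta4_at_zero_pos (ha : a ≠ 0)
    (hpos : ∀ ε, 0 < ε → 0 < reducedDelta4 a h M N K ε 0) : h * M ≤ a * (1 + K) := by
  have hlim : 0 ≤ (a * (1 + K) - h * M) * a ^ 2 :=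
    ge_of_tendsto (tendsto_reducedDelta4_at_zero a h M N K) <|
      eventually_mem_nhdsWithin.mono fun ε hε => (hpos ε hε).le
  exact sub_nonneg.1 (nonneg_of_mul_nonneg_left hlim (sq_pos_of_ne_zero ha))

theorem forall_reducedDelta4_at_zero_pos_iff_le (ha : 0 < a) (hK : 0 < K) :
    (∀ ε, 0 < ε → 0 < reducedDelta4 a h M N K ε 0) ↔ h * M ≤ a * (1 + K) := by
  refine ⟨le_of_forall_reducedDelta4_at_zero_pos ha.ne', fun hle ε hε => ?_⟩
  have hb₁ : 0 < b₁ a K ε := b₁_pos ha hK.le hε.le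
  rw [reducedDelta4_at_zero]
  exact add_pos_of_nonneg_of_pos (mul_nonneg (sub_nonneg.2 hle) (sq_nonneg _)) (by positivity)

theorem reducedDelta4_at_zero_pos_iff_lt (hb₁ : b₁ a 0 ε ≠ 0) :
    0 < reducedDelta4 a h M N 0 ε 0 ↔ h * M < a := by
  rw [reducedDelta4_at_zero, zero_mul, mul_zero, zero_mul, add_zero, add_zero,
    mul_one, mul_pos_iff_of_pos_right (sq_pos_of_ne_zero hb₁), sub_pos]

theorem forall_reducedDelta4_at_zero_pos_iff_lt (ha : 0 < a) :
    (∀ ε, 0 < ε → 0 < reducedDelta4 a h M N 0 ε 0) ↔ h * M < a := by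
  have hiff {ε : ℝ} (hε : 0 < ε) : 0 < reducedDelta4 a h M N 0 ε 0 ↔ h * M < a :=
    reducedDelta4_at_zero_pos_iff_lt (b₁_pos ha le_rfl hε.le).ne'
  exact ⟨fun hpos => (hiff one_pos).1 (hpos 1 one_pos), fun hlt _ hε => (hiff hε).2 hlt⟩

end LandscapeHurwitz

/-- For `K̄ > 0` positivity for all `ε > 0`, `t ≥ 0` is equivalent to `a (1 + K̄) ≥ h̃ M`;
for `K̄ = 0` it is equivalent to the strict inequality. -/
theorem hurwitz_delta4_pos_iff (a h M N K : ℝ)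
    (ha : 0 < a) (hh : 0 < h) (hM : 0 < M) (hN : 0 < N) :
    (0 < K →
      ((∀ ε : ℝ, 0 < ε → ∀ t : ℝ, 0 ≤ t →
          0 < LandscapeHurwitz.reducedDelta4 a h M N K ε t) ↔
        a * (1 + K) ≥ h * M)) ∧
    (K = 0 →
      ((∀ ε : ℝ, 0 < ε → ∀ t : ℝ, 0 ≤ t →
          0 < LandscapeHurwitz.reducedDelta4 a h M N K ε t) ↔
        a * (1 + K) > h * M)) := by
  have pos_iff_pos_at_zero (hK : 0 ≤ K) :
      (∀ ε : ℝ, 0 < ε → ∀ t : ℝ, 0 ≤ t → 0 < LandscapeHurwitz.reducedDelta4 a h M N K ε t) ↔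
        ∀ ε : ℝ, 0 < ε → 0 < LandscapeHurwitz.reducedDelta4 a h M N K ε 0 :=
    forall₂_congr fun ε hε =>
      LandscapeHurwitz.forall_reducedDelta4_pos_iff_at_zero ha (mul_pos hN hh).le hK hε.le
  constructor
  · intro hK
    exact (pos_iff_pos_at_zero hK.le).trans
      (LandscapeHurwitz.forall_reducedDelta4_at_zero_pos_iff_le ha hK)
  · rintro rfl
    rw [add_zero, mul_one]
    exact (pos_iff_pos_at_zero le_rfl).trans
      (LandscapeHurwitz.forall_reducedDelta4_at_zero_pos_iff_lt ha)
end

section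
/- Fix reals $a > 0$, $\tilde h > 0$, $M > 0$, $N > 0$, $\bar\xi \in \mathbb{R}$ and $\varepsilon > 0$. Consider the monic cubic $Q(\lambda) = \lambda^3 + (a_1+ib_1)\lambda^2 + (a_2+ib_2)\lambda + (a_3+ib_3)$ with $a_1 = -\bar\xi(1+N\tilde h)$, $b_1 = -(a+\varepsilon)$, $a_2 = -\varepsilon(a - \tilde h M)$, $b_2 = \bar\xi(a+\varepsilon)$, $a_3 = a\varepsilon\bar\xi$, $b_3 = 0$ (the cubic of the linearized landscape evolution system with creep coefficient $\bar K = 0$), and let $\Delta_6$ be its $6\times 6$ Hurwitz determinant $$\Delta_6 = \det\begin{pmatrix} 1 & a_1 & a_2 & a_3 & 0 & 0\\ 0 & b_1 & b_2 & b_3 & 0 & 0\\ 0 & 1 & a_1 & a_2 & a_3 & 0\\ 0 & 0 & b_1 & b_2 & b_3 & 0\\ 0 & 0 & 1 & a_1 & a_2 & a_3\\ 0 & 0 & 0 & b_1 & b_2 & b_3\end{pmatrix}.$$ Then $$-\Delta_6 = a\,\tilde h\,\varepsilon\,\bar\xi^2\,(a+\varepsilon)^3\,(N\bar\xi^2 -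 M\varepsilon).$$ -/
open Polynomial

noncomputable section

/-- The third (6×6) Hurwitz determinant of a complex cubic
`Q = X³ + (a₁ + i b₁) X² + (a₂ + i b₂) X + (a₃ + i b₃)`, with `a_k`, `b_k` the real and imaginary
parts of the coefficient of `X^(3-k)`. -/
def hurwitzDelta6 (Q : ℂ[X]) : ℝ :=
  let a₁ := (Q.coeff 2).re
  let b₁ := (Q.coeff 2).im
  let a₂ := (Q.coeff 1).re
  let b₂ := (Q.coeff 1).im
  let a₃ := (Q.coeff 0).re
  let b₃ := (Q.coeff 0).im
  Matrix.det !![(1 : ℝ), a₁, a₂, a₃, 0, 0;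
                0, b₁, b₂, b₃, 0, 0;
                0, 1, a₁, a₂, a₃, 0;
                0, 0, b₁, b₂, b₃, 0;
                0, 0, 1, a₁, a₂, a₃;
                0, 0, 0, b₁, b₂, b₃]

/-- The cubic `Q(λ)` of the linearized landscape evolution system without creep (`K̄ = 0`).
Here `ht` is `h̃`, `xib` is `ξ̄`, `eps` is `ε`, and `⟨x, y⟩` is the complex number `x + i y`. -/
def noCreepCubic (a ht M N xib eps : ℝ) : ℂ[X] :=
  X ^ 3 + C (⟨-(xib * (1 + N * ht)), -(a + eps)⟩ : ℂ) * X ^ 2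
    + C (⟨-(eps * (a - ht * M)), xib * (a + eps)⟩ : ℂ) * X
    + C (⟨a * eps * xib, 0⟩ : ℂ)

end

/-!
Writing `Q = P + i B` with `P`, `B` real, the rows of the Hurwitz matrix are, up to order, the
columns of the Sylvester matrix of `P` and `B`, so `Δ₆ = -Res(P, B)`. Without creep `B` has the
explicit roots `0` and `ξ̄`, namely `B = -(a + ε) X (X - ξ̄)`, hence `-Δ₆ = -(a + ε)³ P(0) P(ξ̄)`;
here `P(0) = a ε ξ̄` and `P(ξ̄) = -h̃ ξ̄ (N ξ̄² - M ε)`.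
-/

section CommRing

variable {R : Type*} [CommRing R]

/-- The `6 × 6` Hurwitz matrix attached to a pair of polynomials of degree at most three, whose
third Hurwitz determinant enters the Routh–Hurwitz criterion for `P + i B`. The coefficient of
`X ^ 3` in `B` is kept, so that `P` and `B` play symmetric roles. -/
def cubicHurwitzMatrix (P B : R[X]) : Matrix (Fin 6) (Fin 6) R :=
  !![P.coeff 3, P.coeff 2, P.coeff 1, P.coeff 0, 0, 0;
     B.coeff 3, B.coeff 2, B.coeff 1, B.coeff 0, 0, 0;
     0, P.coeff 3, P.coeff 2, P.coeff 1, P.coeff 0, 0;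
     0, B.coeff 3, B.coeff 2, B.coeff 1, B.coeff 0, 0;
     0, 0, P.coeff 3, P.coeff 2, P.coeff 1, P.coeff 0;
     0, 0, B.coeff 3, B.coeff 2, B.coeff 1, B.coeff 0]

/-- The perfect shuffle of six indices, which interleaves the second block of three with the
first. It turns the order of the coefficient vectors in the Sylvester matrix (all shifts of `B`,
then all shifts of `P`) into the alternating one of the Hurwitz matrix. -/
def hurwitzShuffle : Equiv.Perm (Fin 6) where
  toFun := ![0, 3, 1, 4, 2, 5]
  invFun := ![0, 2, 4, 1, 3, 5]
  left_inv := by decide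
  right_inv := by decide

theorem sign_hurwitzShuffle : hurwitzShuffle.sign = -1 := by
  decide

-- Both index sets are reversed because `sylvester` lists coefficients from the constant term up.
theorem cubicHurwitzMatrix_eq_submatrix_sylvester (P B : R[X]) :
    cubicHurwitzMatrix P B =
      ((sylvester P B 3 3).transpose.submatrix hurwitzShuffle id).submatrix
        Fin.revPerm Fin.revPerm := by
  ext i j
  fin_cases i <;> fin_cases j <;> rfl

theorem det_cubicHurwitzMatrix (P B : R[X]) :
    (cubicHurwitzMatrix P B).det = -resultant P B 3 3 := by
  rw [cubicHurwitzMatrix_eq_submatrix_sylvester, Matrix.det_submatrix_equiv_self,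
    Matrix.det_permute, Matrix.det_transpose, sign_hurwitzShuffle, resultant]
  simp only [Units.val_neg, Units.val_one, Int.cast_neg, Int.cast_one, neg_one_mul]

theorem resultant_C_mul_X_sub_C_mul_X_sub_C {P : R[X]} {m : ℕ} (hP : P.natDegree ≤ m)
    (b r s : R) :
    resultant P (C b * ((X - C r) * (X - C s))) m 2 = b ^ m * (P.eval r * P.eval s) := by
  nontriviality R
  have split : resultant P ((X - C r) * (X - C s)) m 2 =
      resultant P (X - C r) m 1 * resultant P (X - C s) m 1 := by
    have := resultant_mul_right P (X - C r) (X - C s) m hP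
    rwa [natDegree_X_sub_C, natDegree_X_sub_C] at this
  have signs_cancel : (-1 : R) ^ m * (-1) ^ m = 1 := by
    rw [← mul_pow, neg_one_mul, neg_neg, one_pow]
  rw [resultant_C_mul_right, split, resultant_X_sub_C_right _ _ _ hP,
    resultant_X_sub_C_right _ _ _ hP, mul_mul_mul_comm, signs_cancel, one_mul]

/-- The real part `P` of the cubic `Q = P + i B` of the linearized landscape evolution system
without creep, over an arbitrary commutative ring. -/
noncomputable def noCreepRe (a ht M N xib eps : R) : R[X] :=
  X ^ 3 + C (-(xib * (1 + N * ht))) * X ^ 2 + C (-(eps * (a - ht * M))) * X + C (a * eps * xib)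

/-- The imaginary part `B` of the cubic `Q = P + i B` of the linearized landscape evolution system
without creep, over an arbitrary commutative ring. -/
noncomputable def noCreepIm (a xib eps : R) : R[X] :=
  C (-(a + eps)) * X ^ 2 + C (xib * (a + eps)) * X

theorem natDegree_noCreepRe_le (a ht M N xib eps : R) :
    (noCreepRe a ht M N xib eps).natDegree ≤ 3 := by
  unfold noCreepRe
  compute_degree

theorem coeff_three_noCreepRe (a ht M N xib eps : R) :
    (noCreepRe a ht M N xib eps).coeff 3 = 1 := by
  norm_num [noCreepRe, coeff_C_mul, coeff_X_pow, coeff_X, coeff_C, -map_neg, -map_mul]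

theorem eval_zero_noCreepRe (a ht M N xib eps : R) :
    (noCreepRe a ht M N xib eps).eval 0 = a * eps * xib := by
  simp [noCreepRe]

theorem eval_xib_noCreepRe (a ht M N xib eps : R) :
    (noCreepRe a ht M N xib eps).eval xib = -(ht * xib * (N * xib ^ 2 - M * eps)) := by
  simp only [noCreepRe, eval_add, eval_mul, eval_pow, eval_X, eval_C]
  ring

theorem natDegree_noCreepIm_le (a xib eps : R) : (noCreepIm a xib eps).natDegree ≤ 2 := by
  unfold noCreepIm
  compute_degree

theorem noCreepIm_eq_C_mul (a xib eps : R) :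
    noCreepIm a xib eps = C (-(a + eps)) * ((X - C 0) * (X - C xib)) := by
  simp only [noCreepIm, map_neg, map_add, map_mul, map_zero]
  ring

theorem resultant_noCreepRe_noCreepIm (a ht M N xib eps : R) :
    resultant (noCreepRe a ht M N xib eps) (noCreepIm a xib eps) 3 3 =
      a * ht * eps * xib ^ 2 * (a + eps) ^ 3 * (N * xib ^ 2 - M * eps) := by
  have hP := natDegree_noCreepRe_le a ht M N xib eps
  rw [resultant_add_right_deg _ _ 3 2 1 (natDegree_noCreepIm_le a xib eps), coeff_three_noCreepRe,
    noCreepIm_eq_C_mul, resultant_C_mul_X_sub_C_mul_X_sub_C hP, eval_zero_noCreepRe,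
    eval_xib_noCreepRe]
  ring

theorem hurwitz_delta6_no_creep_general (a ht M N xib eps : R) :
    -(cubicHurwitzMatrix (noCreepRe a ht M N xib eps) (noCreepIm a xib eps)).det =
      a * ht * eps * xib ^ 2 * (a + eps) ^ 3 * (N * xib ^ 2 - M * eps) := by
  rw [det_cubicHurwitzMatrix, neg_neg, resultant_noCreepRe_noCreepIm]

end CommRing

theorem hurwitzDelta6_map_add_C_I_mul_map {P B : ℝ[X]} (hP : P.coeff 3 = 1) (hB : B.coeff 3 = 0) :
    hurwitzDelta6 (P.map Complex.ofRealHom + C Complex.I * B.map Complex.ofRealHom) =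
      (cubicHurwitzMatrix P B).det := by
  simp [hurwitzDelta6, cubicHurwitzMatrix, hP, hB]

theorem noCreepCubic_eq_map_add_C_I_mul_map (a ht M N xib eps : ℝ) :
    noCreepCubic a ht M N xib eps =
      (noCreepRe a ht M N xib eps).map Complex.ofRealHom +
        C Complex.I * (noCreepIm a xib eps).map Complex.ofRealHom := by
  simp only [noCreepCubic, noCreepRe, noCreepIm, Complex.mk_eq_add_mul_I, Polynomial.map_add,
    Polynomial.map_mul, Polynomial.map_pow, map_X, map_C, Complex.ofRealHom_eq_coe, C_add, C_mul,
    Complex.ofReal_add, Complex.ofReal_mul, Complex.ofReal_zero, C_0]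
  ring

/-- Explicit evaluation of the third Hurwitz determinant of the cubic of the linearized landscape
evolution system without creep: `−Δ₆ = a·h̃·ε·ξ̄²·(a+ε)³·(N ξ̄² − M ε)`. -/
theorem hurwitz_delta6_no_creep (a ht M N xib eps : ℝ)
    (ha : 0 < a) (hht : 0 < ht) (hM : 0 < M) (hN : 0 < N) (heps : 0 < eps) :
    -hurwitzDelta6 (noCreepCubic a ht M N xib eps) =
      a * ht * eps * xib ^ 2 * (a + eps) ^ 3 * (N * xib ^ 2 - M * eps) := by
  have re_monic := coeff_three_noCreepRe a ht M N xib eps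
  have im_quadratic : (noCreepIm a xib eps).coeff 3 = 0 :=
    coeff_eq_zero_of_natDegree_lt (Nat.lt_succ_of_le (natDegree_noCreepIm_le a xib eps))
  rw [noCreepCubic_eq_map_add_C_I_mul_map,
    hurwitzDelta6_map_add_C_I_mul_map re_monic im_quadratic, hurwitz_delta6_no_creep_general]
end
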